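/- Let α > −1 and n ≥ 1, let ψ be analytic on 𝔻, not identically 0, and φ a nonconstant analytic self-map of 𝔻, and suppose D_{ψ,φ,n} is bounded and normal on A_α² (i.e. commutes with its adjoint). Then ψ^{(m)}(0) = 0 for every integer 0 ≤ m < n, ψ^{(n)}(0) ≠ 0, ψ(w) ≠ 0 for every w ∈ 𝔻 \ {0}, and φ is univalent on 𝔻. -/

import Mathlib

open Complex Metric Set

noncomputable section

/-- The open unit disk in `ℂ`. -/
def unitDisk : Set ℂ := Metric.ball 0 1

/-- `wb2 α j` is `β(j)² = j!·Γ(α+2)/Γ(j+α+2)`, the square of the norm of `z^j` in `A_α²`. -/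
def wb2 (α : ℝ) (j : ℕ) : ℝ :=
  (j.factorial : ℝ) * Real.Gamma (α + 2) / Real.Gamma ((j : ℝ) + α + 2)

/-- The `j`-th Taylor coefficient of `f` at `0`. -/
def tcoeff (f : ℂ → ℂ) (j : ℕ) : ℂ := iteratedDeriv j f 0 / (j.factorial : ℂ)

/-- An abstract model of the weighted Bergman space `A_α²`: a complex Hilbert space `H`
whose elements are (identified with) the analytic functions on the unit disk with
square-summable weighted Taylor coefficients, with the weighted `ℓ²` inner product. -/
structure BergmanModel (α : ℝ) (H : Type) [NormedAddCommGroup H]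
    [InnerProductSpace ℂ H] where
  emb : H →ₗ[ℂ] (ℂ → ℂ)
  analyticOn : ∀ f : H, AnalyticOnNhd ℂ (emb f) unitDisk
  summable_norm : ∀ f : H, Summable (fun j => ‖tcoeff (emb f) j‖ ^ 2 * wb2 α j)
  inj : ∀ f g : H, Set.EqOn (emb f) (emb g) unitDisk → f = g
  exists_rep : ∀ F : ℂ → ℂ, AnalyticOnNhd ℂ F unitDisk →
      Summable (fun j => ‖tcoeff F j‖ ^ 2 * wb2 α j) →
      ∃ f : H, Set.EqOn (emb f) F unitDisk
  inner_eq : ∀ f g : H,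
      (@inner ℂ H _ f g) =
        ∑' j : ℕ, (starRingEnd ℂ) (tcoeff (emb f) j) * tcoeff (emb g) j * (wb2 α j : ℂ)

/-- The derivative-evaluation kernel `K_w^{(m)}(z) = m!·z^m / (β(m)²·(1-conj(w)·z)^(m+α+2))`. -/
def kern (α : ℝ) (m : ℕ) (w z : ℂ) : ℂ :=
  (m.factorial : ℂ) * z ^ m /
    ((wb2 α m : ℂ) * (1 - (starRingEnd ℂ) w * z) ^ ((m : ℂ) + (α : ℂ) + 2))

theorem unitDisk_open : IsOpen unitDisk := Metric.isOpen_ball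

theorem unitDisk_preconn : IsPreconnected unitDisk := (convex_ball (0 : ℂ) 1).isPreconnected

theorem zero_mem_unitDisk : (0 : ℂ) ∈ unitDisk := by simp [unitDisk]

theorem wb2_pos {α : ℝ} (hα : -1 < α) (j : ℕ) : 0 < wb2 α j := by
  unfold wb2
  have h1 : 0 < Real.Gamma (α + 2) := Real.Gamma_pos_of_pos (by linarith)
  have h2 : 0 < Real.Gamma ((j : ℝ) + α + 2) :=
    Real.Gamma_pos_of_pos (by have : (0:ℝ) ≤ j := Nat.cast_nonneg j
                              linarith)
  positivity

theorem wb2_succ {α : ℝ} (hα : -1 < α) (j : ℕ) :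
    wb2 α j = wb2 α (j + 1) * (((j : ℝ) + α + 2) / (j + 1)) := by
  unfold wb2
  have hj : (0:ℝ) ≤ j := Nat.cast_nonneg j
  have h0 : (0:ℝ) < (j : ℝ) + α + 2 := by linarith
  have h2 : 0 < Real.Gamma ((j : ℝ) + α + 2) := Real.Gamma_pos_of_pos h0
  have h3 : Real.Gamma (((j + 1 : ℕ) : ℝ) + α + 2) =
      ((j : ℝ) + α + 2) * Real.Gamma ((j : ℝ) + α + 2) := by
    rw [← Real.Gamma_add_one h0.ne']
    congr 1
    push_cast
    ring
  rw [h3, Nat.factorial_succ]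
  push_cast
  field_simp

theorem ratio_tendsto (α : ℝ) :
    Filter.Tendsto (fun j : ℕ => ((j : ℝ) + α + 2) / (j + 1)) Filter.atTop (nhds 1) := by
  have h : Filter.Tendsto (fun j : ℕ => 1 + (α + 1) * (1 / ((j : ℝ) + 1))) Filter.atTop
      (nhds (1 + (α + 1) * 0)) :=
    tendsto_const_nhds.add (tendsto_one_div_add_atTop_nhds_zero_nat.const_mul _)
  rw [mul_zero, add_zero] at h
  refine h.congr fun j => ?_
  have : (j : ℝ) + 1 ≠ 0 := by positivity
  field_simp
  ring

theorem summable_aux {α : ℝ} (hα : -1 < α) {H : Type} [NormedAddCommGroup H]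
    [InnerProductSpace ℂ H] [CompleteSpace H] (e : ℕ → H)
    (he : ∀ j, ‖e j‖ = Real.sqrt (wb2 α j)) (w : ℂ) (hw : ‖w‖ < 1) :
    Summable (fun j : ℕ => (w ^ j / (wb2 α j : ℂ)) • e j) := by
  obtain ⟨r, hr1, hr2⟩ := exists_between hw
  apply summable_of_ratio_norm_eventually_le hr2
  have ht : Filter.Tendsto (fun j : ℕ => ‖w‖ * Real.sqrt (((j : ℝ) + α + 2) / (j + 1)))
      Filter.atTop (nhds (‖w‖ * Real.sqrt 1)) :=
    ((Real.continuous_sqrt.tendsto 1).comp (ratio_tendsto α)).const_mul _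
  rw [Real.sqrt_one, mul_one] at ht
  have hn : ∀ j, ‖(w ^ j / (wb2 α j : ℂ)) • e j‖ = ‖w‖ ^ j / Real.sqrt (wb2 α j) := by
    intro j
    have hp := wb2_pos hα j
    rw [norm_smul, he, norm_div, norm_pow, Complex.norm_real, Real.norm_of_nonneg hp.le]
    have h1 : Real.sqrt (wb2 α j) ≠ 0 := (Real.sqrt_pos.2 hp).ne'
    rw [div_mul_eq_mul_div, div_eq_div_iff hp.ne' h1, mul_assoc, Real.mul_self_sqrt hp.le]
  filter_upwards [ht.eventually_lt_const hr1] with j hj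
  rw [hn, hn]
  have hp := wb2_pos hα j
  have hp1 := wb2_pos hα (j + 1)
  have h1 : 0 < Real.sqrt (wb2 α j) := Real.sqrt_pos.2 hp
  have h2 : 0 < Real.sqrt (wb2 α (j + 1)) := Real.sqrt_pos.2 hp1
  have h3 : Real.sqrt (wb2 α j) = Real.sqrt (wb2 α (j + 1)) *
      Real.sqrt (((j : ℝ) + α + 2) / (j + 1)) := by
    rw [← Real.sqrt_mul hp1.le, ← wb2_succ hα]
  have h4 : ‖w‖ ^ (j + 1) / Real.sqrt (wb2 α (j + 1)) =
      (‖w‖ * Real.sqrt (((j : ℝ) + α + 2) / (j + 1))) * (‖w‖ ^ j / Real.sqrt (wb2 α j)) := by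
    rw [div_eq_iff h2.ne', pow_succ]
    have : ‖w‖ * Real.sqrt (((j : ℝ) + α + 2) / (j + 1)) * (‖w‖ ^ j / Real.sqrt (wb2 α j)) *
      Real.sqrt (wb2 α (j + 1)) = ‖w‖ ^ j * ‖w‖ * ((Real.sqrt (wb2 α (j + 1)) *
      Real.sqrt (((j : ℝ) + α + 2) / (j + 1))) / Real.sqrt (wb2 α j)) := by ring
    rw [this, ← h3, div_self h1.ne', mul_one]
  rw [h4]
  gcongr

/-- Monomials in the model. -/
theorem exists_monomials {α : ℝ} (hα : -1 < α) {H : Type} [NormedAddCommGroup H]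
    [InnerProductSpace ℂ H] (M : BergmanModel α H) :
    ∃ e : ℕ → H, (∀ j, Set.EqOn (M.emb (e j)) (fun z => z ^ j) unitDisk) ∧
      (∀ j f, inner ℂ (e j) f = tcoeff (M.emb f) j * (wb2 α j : ℂ)) ∧
      (∀ j, ‖e j‖ = Real.sqrt (wb2 α j)) := by
  have ht : ∀ j k : ℕ, tcoeff (fun z => z ^ j) k = if k = j then 1 else 0 := by
    intro j k
    unfold tcoeff
    rw [iteratedDeriv_fun_pow_zero]
    split_ifs with h
    · subst h
      exact div_self (by exact_mod_cast k.factorial_ne_zero)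
    · simp
  have hex : ∀ j : ℕ, ∃ f : H, Set.EqOn (M.emb f) (fun z => z ^ j) unitDisk := by
    intro j
    apply M.exists_rep
    · intro z _
      fun_prop
    · refine summable_of_ne_finset_zero (s := {j}) ?_
      intro k hk
      have : k ≠ j := by simpa using hk
      simp [ht, this]
  choose e he using hex
  have hte : ∀ j k : ℕ, tcoeff (M.emb (e j)) k = if k = j then 1 else 0 := by
    intro j k
    rw [← ht j k]
    unfold tcoeff
    rw [(he j).iteratedDeriv_of_isOpen unitDisk_open k zero_mem_unitDisk]
  have hin : ∀ j f, inner ℂ (e j) f = tcoeff (M.emb f) j * (wb2 α j : ℂ) := by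
    intro j f
    rw [M.inner_eq, tsum_eq_single j]
    · simp [hte]
    · intro k hk
      simp [hte, hk]
  refine ⟨e, he, hin, fun j => ?_⟩
  have h1 := hin j (e j)
  rw [hte, if_pos rfl, one_mul, inner_self_eq_norm_sq_to_K] at h1
  have h2 : ‖e j‖ ^ 2 = wb2 α j := Complex.ofReal_injective (by push_cast; exact h1)
  rw [← h2, Real.sqrt_sq (norm_nonneg _)]

/-- Reproducing kernels. -/
theorem exists_kernel {α : ℝ} (hα : -1 < α) {H : Type} [NormedAddCommGroup H]
    [InnerProductSpace ℂ H] [CompleteSpace H] (M : BergmanModel α H) (e : ℕ → H)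
    (hin : ∀ j f, inner ℂ (e j) f = tcoeff (M.emb f) j * (wb2 α j : ℂ))
    (hen : ∀ j, ‖e j‖ = Real.sqrt (wb2 α j)) (w : ℂ) (hw : w ∈ unitDisk) :
    ∃ k : H, ∀ f, inner ℂ k f = M.emb f w := by
  have hw1 : ‖(starRingEnd ℂ) w‖ < 1 := by simpa [unitDisk] using hw
  obtain ⟨k, hk⟩ := summable_aux hα e hen _ hw1
  refine ⟨k, fun f => ?_⟩
  have h1 := hk.mapL (innerSL ℂ f)
  have h2 := Complex.hasSum_taylorSeries_on_ball
    (M.analyticOn f).differentiableOn hw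
  have h3 : HasSum (fun b => (innerSL ℂ f) (((starRingEnd ℂ) w ^ b / (wb2 α b : ℂ)) • e b))
      ((starRingEnd ℂ) (M.emb f w)) := by
    rw [← Complex.hasSum_conj'] at h2
    convert h2 using 2 with j
    have hp : (wb2 α j : ℂ) ≠ 0 := by exact_mod_cast (wb2_pos hα j).ne'
    rw [innerSL_apply_apply, inner_smul_right, ← inner_conj_symm, hin]
    simp only [tcoeff, smul_eq_mul, map_mul, map_div₀, map_pow, map_inv₀, sub_zero,
      Complex.conj_ofReal, map_natCast]
    field_simp
  have h4 := h1.unique h3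
  rw [← inner_conj_symm, ← innerSL_apply_apply ℂ f k, h4, Complex.conj_conj]

/-- If `D_{ψ,φ,n}` is bounded and normal on `A_α²`, then `ψ⁽ᵐ⁾(0) = 0`
for all `0 ≤ m < n`, `ψ⁽ⁿ⁾(0) ≠ 0`, `ψ(w) ≠ 0` for every `w ∈ 𝔻 \ {0}`, and `φ` is
univalent on `𝔻`. -/
theorem stmt_6 (α : ℝ) (hα : -1 < α) (n : ℕ) (hn : 1 ≤ n)
    (H : Type) [NormedAddCommGroup H] [InnerProductSpace ℂ H] [CompleteSpace H]
    (M : BergmanModel α H)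
    (ψ : ℂ → ℂ) (hψa : AnalyticOnNhd ℂ ψ unitDisk)
    (hψ0 : ∃ z ∈ unitDisk, ψ z ≠ 0)
    (φ : ℂ → ℂ) (hφa : AnalyticOnNhd ℂ φ unitDisk)
    (hφm : ∀ z ∈ unitDisk, φ z ∈ unitDisk)
    (hφnc : ∃ z ∈ unitDisk, ∃ w ∈ unitDisk, φ z ≠ φ w)
    (T : H →L[ℂ] H)
    (hT : ∀ f : H, ∀ z ∈ unitDisk,
      M.emb (T f) z = ψ z * iteratedDeriv n (M.emb f) (φ z))
    -- `T` is normal: it commutes with its adjoint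
    (hnormal : T.comp (ContinuousLinearMap.adjoint T)
      = (ContinuousLinearMap.adjoint T).comp T) :
    (∀ m < n, iteratedDeriv m ψ 0 = 0) ∧ iteratedDeriv n ψ 0 ≠ 0 ∧
      (∀ w ∈ unitDisk, w ≠ 0 → ψ w ≠ 0) ∧ Set.InjOn φ unitDisk := by
  obtain ⟨e, he, hin, hen⟩ := exists_monomials hα M
  have hker := exists_kernel hα M e hin hen
  have hwb : ∀ j, (wb2 α j : ℂ) ≠ 0 := fun j => by exact_mod_cast (wb2_pos hα j).ne'
  have hfac : ∀ j : ℕ, (j.factorial : ℂ) ≠ 0 := fun j => by exact_mod_cast j.factorial_ne_zero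
  -- kernels of `T` and its adjoint agree
  have hTadj : ∀ g : H, T g = 0 ↔ ContinuousLinearMap.adjoint T g = 0 := by
    intro g
    have h1 : T (ContinuousLinearMap.adjoint T g) = ContinuousLinearMap.adjoint T (T g) :=
      congrArg (fun S : H →L[ℂ] H => S g) hnormal
    have h2 : inner ℂ (T g) (T g) =
        inner ℂ (ContinuousLinearMap.adjoint T g) (ContinuousLinearMap.adjoint T g) := by
      rw [← ContinuousLinearMap.adjoint_inner_left, ← h1,
        ContinuousLinearMap.adjoint_inner_right]
    rw [← inner_self_eq_zero (𝕜 := ℂ), h2, inner_self_eq_zero]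
  have han : ∀ f : H, AnalyticOnNhd ℂ (iteratedDeriv n (M.emb f)) unitDisk := by
    intro f
    rw [iteratedDeriv_eq_iterate]
    exact (M.analyticOn f).iterated_deriv n
  have hanc : ∀ f : H, AnalyticOnNhd ℂ (fun z => iteratedDeriv n (M.emb f) (φ z)) unitDisk :=
    fun f => (han f).comp hφa hφm
  -- kernel of `T`
  have hkerT : ∀ g : H, T g = 0 → ∀ j, n ≤ j → inner ℂ (e j) g = 0 := by
    intro g hg j hj
    have h0 : ∀ z ∈ unitDisk, ψ z * iteratedDeriv n (M.emb g) (φ z) = 0 := by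
      intro z hz
      rw [← hT g z hz, hg]
      simp
    have h1 : ∀ z ∈ unitDisk, iteratedDeriv n (M.emb g) (φ z) = 0 := by
      rcases AnalyticOnNhd.eq_zero_or_eq_zero_of_mul_eq_zero hψa (hanc g) h0
        unitDisk_preconn with h | h
      · obtain ⟨z, hz, hz'⟩ := hψ0
        exact absurd (h z hz) hz'
      · exact h
    have h2 : IsOpen (φ '' unitDisk) := by
      rcases hφa.is_constant_or_isOpen unitDisk_preconn with ⟨c, hc⟩ | h
      · obtain ⟨z, hz, w, hw, hzw⟩ := hφnc
        exact absurd ((hc z hz).trans (hc w hw).symm) hzw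
      · exact h _ subset_rfl unitDisk_open
    have h3 : Set.EqOn (iteratedDeriv n (M.emb g)) 0 unitDisk := by
      refine (han g).eqOn_zero_of_preconnected_of_eventuallyEq_zero unitDisk_preconn
        (hφm 0 zero_mem_unitDisk) ?_
      filter_upwards [h2.mem_nhds ⟨0, zero_mem_unitDisk, rfl⟩] with y hy
      obtain ⟨z, hz, rfl⟩ := hy
      exact h1 z hz
    obtain ⟨k, rfl⟩ := Nat.exists_eq_add_of_le hj
    have h4 : iteratedDeriv (n + k) (M.emb g) = iteratedDeriv k (iteratedDeriv n (M.emb g)) := by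
      simp only [iteratedDeriv_eq_iterate]
      rw [add_comm, Function.iterate_add_apply]
    have h5 := h3.iteratedDeriv_of_isOpen unitDisk_open k zero_mem_unitDisk
    have h6 : iteratedDeriv k (0 : ℂ → ℂ) 0 = 0 := by
      rw [show (0 : ℂ → ℂ) = fun _ => 0 from rfl, iteratedDeriv_const]
      simp
    rw [hin, tcoeff, h4, h5, h6]
    simp
  have hkey : ∀ g : H, (∀ f, inner ℂ g (T f) = 0) → ∀ j, n ≤ j → inner ℂ (e j) g = 0 := by
    intro g hg
    apply hkerT g
    rw [hTadj, ← inner_self_eq_zero (𝕜 := ℂ), ContinuousLinearMap.adjoint_inner_left]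
    exact hg _
  have hee : ∀ j k, inner ℂ (e j) (e k) = if j = k then (wb2 α j : ℂ) else 0 := by
    intro j k
    rw [hin, tcoeff, (he k).iteratedDeriv_of_isOpen unitDisk_open j zero_mem_unitDisk,
      iteratedDeriv_fun_pow_zero]
    split_ifs with h
    · subst h
      rw [div_self (hfac _), one_mul]
    · simp
  have hek : ∀ w ∈ unitDisk, ∀ k : H, (∀ f, inner ℂ k f = M.emb f w) →
      ∀ j, inner ℂ (e j) k = (starRingEnd ℂ) w ^ j := by
    intro w hw k hk j
    rw [← inner_conj_symm, hk, he j hw, map_pow]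
  -- low order coefficients vanish
  have hTe : ∀ m < n, T (e m) = 0 := by
    intro m hm
    apply M.inj
    intro z hz
    rw [hT _ z hz, (he m).iteratedDeriv_of_isOpen unitDisk_open n (hφm z hz), iteratedDeriv_pow,
      Nat.descFactorial_of_lt hm]
    simp
  have hlow : ∀ m < n, iteratedDeriv m ψ 0 = 0 := by
    intro m hm
    have h1 : inner ℂ (e m) (T (e n)) = 0 := by
      rw [← ContinuousLinearMap.adjoint_inner_left, (hTadj _).1 (hTe m hm), inner_zero_left]
    have h2 : Set.EqOn (M.emb (T (e n))) (fun z => (n.factorial : ℂ) * ψ z) unitDisk := by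
      intro z hz
      rw [hT _ z hz, (he n).iteratedDeriv_of_isOpen unitDisk_open n (hφm z hz), iteratedDeriv_pow,
        Nat.descFactorial_self]
      simp [mul_comm]
    rw [hin, tcoeff, h2.iteratedDeriv_of_isOpen unitDisk_open m zero_mem_unitDisk,
      iteratedDeriv_const_mul _ (hψa 0 zero_mem_unitDisk).contDiffAt] at h1
    simpa [hwb, hfac] using h1
  have hTn : ∀ f, inner ℂ (e n) (T f) =
      (iteratedDeriv n ψ 0 / (n.factorial : ℂ) * (wb2 α n : ℂ)) *
        iteratedDeriv n (M.emb f) (φ 0) := by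
    intro f
    have h2 : Set.EqOn (M.emb (T f)) (fun z => ψ z * iteratedDeriv n (M.emb f) (φ z)) unitDisk :=
      hT f
    rw [hin, tcoeff, h2.iteratedDeriv_of_isOpen unitDisk_open n zero_mem_unitDisk,
      iteratedDeriv_fun_mul (hψa 0 zero_mem_unitDisk).contDiffAt
        (hanc f 0 zero_mem_unitDisk).contDiffAt, Finset.sum_range_succ, Finset.sum_eq_zero]
    · simp
      ring
    · intro i hi
      rw [hlow i (Finset.mem_range.1 hi)]
      simp
  have hψn : iteratedDeriv n ψ 0 ≠ 0 := by
    intro h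
    have h1 := hkey (e n) (fun f => by rw [hTn, h]; simp) n le_rfl
    rw [hee, if_pos rfl] at h1
    exact hwb n h1
  have hψne : ∀ w ∈ unitDisk, w ≠ 0 → ψ w ≠ 0 := by
    intro w hw hw0 h
    obtain ⟨k, hk⟩ := hker w hw
    have h1 := hkey k (fun f => by rw [hk, hT f w hw, h, zero_mul]) n le_rfl
    rw [hek w hw k hk] at h1
    simp [hw0] at h1
  have hzero : ∀ w ∈ unitDisk, φ w = φ 0 → w = 0 := by
    intro w hw hφ
    by_contra hw0
    obtain ⟨k, hk⟩ := hker w hw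
    set A : ℂ := iteratedDeriv n ψ 0 / (n.factorial : ℂ) * (wb2 α n : ℂ) with hA
    have hA0 : A ≠ 0 := mul_ne_zero (div_ne_zero hψn (hfac n)) (hwb n)
    have h1 := hkey ((starRingEnd ℂ) A • k - (starRingEnd ℂ) (ψ w) • e n) (fun f => by
      rw [inner_sub_left, inner_smul_left, inner_smul_left, hk, hT f w hw, hTn, hφ,
        Complex.conj_conj, Complex.conj_conj]
      ring) (n + 1) (by omega)
    rw [inner_sub_right, inner_smul_right, inner_smul_right, hek w hw k hk, hee] at h1
    simp [hA0, hw0] at h1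
  refine ⟨hlow, hψn, hψne, ?_⟩
  intro w₁ hw₁ w₂ hw₂ hφ
  by_cases h10 : w₁ = 0
  · rw [h10] at hφ ⊢
    exact (hzero w₂ hw₂ hφ.symm).symm
  by_cases h20 : w₂ = 0
  · rw [h20] at hφ ⊢
    exact hzero w₁ hw₁ hφ
  obtain ⟨k₁, hk₁⟩ := hker w₁ hw₁
  obtain ⟨k₂, hk₂⟩ := hker w₂ hw₂
  have h1 := hkey ((starRingEnd ℂ) (ψ w₂) • k₁ - (starRingEnd ℂ) (ψ w₁) • k₂) (fun f => by
      rw [inner_sub_left, inner_smul_left, inner_smul_left, hk₁, hk₂, hT f w₁ hw₁, hT f w₂ hw₂,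
        hφ, Complex.conj_conj, Complex.conj_conj]
      ring)
  have h2 := h1 n le_rfl
  have h3 := h1 (n + 1) (by omega)
  rw [inner_sub_right, inner_smul_right, inner_smul_right, hek w₁ hw₁ k₁ hk₁,
    hek w₂ hw₂ k₂ hk₂] at h2 h3
  have h4 : ((starRingEnd ℂ) (ψ w₂) * (starRingEnd ℂ) w₁ ^ n) *
      ((starRingEnd ℂ) w₁ - (starRingEnd ℂ) w₂) = 0 := by
    linear_combination h3 - (starRingEnd ℂ) w₂ * h2
  rcases mul_eq_zero.1 h4 with h | h
  · have := hψne w₂ hw₂ h20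
    simp [this, h10] at h
  · rw [← map_sub, map_eq_zero] at h
    exact sub_eq_zero.1 h
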